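/- Let (Q, 𝔫, k) be a commutative Noetherian local ring and I ⊆ Q a grade 3 perfect ideal of resolution format (1, m, m+n−1, n). If m ≥ 5, then there exists a grade 3 perfect ideal of resolution format (1, m, m+n, n+1) that is linked to I. -/

import Mathlib

/-- An ideal `I` in a commutative Noetherian local ring `Q` has **resolution format**
`(1, m, m+n-1, n)` if the minimal free resolution of `Q/I` over `Q` is
`0 → Q^n → Q^{m+n-1} → Q^m → Q`, i.e. there is an exact complex of free modules of the
indicated ranks augmented by `Q → Q/I → 0`, which is minimal in the sense that each
differential maps into `𝔫` times the target (`𝔫` the maximal ideal).  Equivalently, the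
`i`-th entry of the format is the Betti number `dim_k Tor_i^Q(Q/I, k)`. -/
def HasResolutionFormat {Q : Type*} [CommRing Q] [IsLocalRing Q]
    (I : Ideal Q) (m n : ℕ) : Prop :=
  ∃ (d1 : (Fin m → Q) →ₗ[Q] Q)
    (d2 : (Fin (m + n - 1) → Q) →ₗ[Q] (Fin m → Q))
    (d3 : (Fin n → Q) →ₗ[Q] (Fin (m + n - 1) → Q)),
    LinearMap.range d1 = I ∧
    LinearMap.range d2 = LinearMap.ker d1 ∧
    LinearMap.range d3 = LinearMap.ker d2 ∧
    LinearMap.ker d3 = ⊥ ∧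
    I ≤ IsLocalRing.maximalIdeal Q ∧
    LinearMap.range d2 ≤ (IsLocalRing.maximalIdeal Q) • (⊤ : Submodule Q (Fin m → Q)) ∧
    LinearMap.range d3 ≤ (IsLocalRing.maximalIdeal Q) • (⊤ : Submodule Q (Fin (m + n - 1) → Q))

/-- `I` is a grade `3` perfect ideal of resolution format `(1, m, m+n-1, n)`:
`I` contains a `Q`-regular sequence of length `3`, one has `m ≥ 3` and `n ≥ 1`, and the
minimal free resolution of `Q/I` has the format `(1, m, m+n-1, n)` (in particular `Q/I`
has projective dimension `3` as a `Q`-module, since `n ≥ 1`). -/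
def IsGrade3PerfectOfFormat {Q : Type*} [CommRing Q] [IsLocalRing Q]
    (I : Ideal Q) (m n : ℕ) : Prop :=
  (∃ x y z : Q, x ∈ I ∧ y ∈ I ∧ z ∈ I ∧ RingTheory.Sequence.IsRegular Q [x, y, z]) ∧
  3 ≤ m ∧ 1 ≤ n ∧ HasResolutionFormat I m n

/-- `J` is **directly linked** to `I` if there is a `Q`-regular sequence `x₁, x₂, x₃` of
elements of `I` with `J = (x₁, x₂, x₃) : I`. -/
def DirectlyLinked {Q : Type*} [CommRing Q] (I J : Ideal Q) : Prop :=
  ∃ x y z : Q, x ∈ I ∧ y ∈ I ∧ z ∈ I ∧ RingTheory.Sequence.IsRegular Q [x, y, z] ∧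
    J = Submodule.colon (Ideal.span {x, y, z}) I

/-- `J` is **linked** to `I` if there is a finite chain of ideals
`I = J₀, J₁, …, J_r = J` in which `J_{i+1}` is directly linked to `J_i` for every `i`. -/
def Linked {Q : Type*} [CommRing Q] (I J : Ideal Q) : Prop :=
  Relation.ReflTransGen (fun A B => DirectlyLinked A B) I J

/-- `I` is **licci** if it is linked to an ideal generated by a `Q`-regular sequence of
length `3`, i.e. `I` is in the linkage class of a complete intersection ideal. -/
def Licci {Q : Type*} [CommRing Q] (I : Ideal Q) : Prop :=
  ∃ C : Ideal Q, Linked I C ∧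
    ∃ x y z : Q, RingTheory.Sequence.IsRegular Q [x, y, z] ∧ C = Ideal.span {x, y, z}

/-!
Let `F` be the minimal free resolution of `Q ⧸ I`. The ideal linked to `I` is a basic double link
`(x, y) + z I` with `x, y, z ∈ I` a regular sequence: linking `I` along `x, y, z` and then along
`x, y, z²` produces it, since `((x, y, z) : ((x, y, z) : I)) = I`. Suppose `x = d₁ a` and
`y = d₁ b` with `a, b` part of a basis of `F₁`. Multiplying the remaining generators of `I` by `z`
does not change their number, and adjoining the Koszul syzygy of `a, b` turns `F` into a resolution
`0 → Q × F₃ → Q × F₂ → F₁ → Q` of `Q ⧸ ((x, y) + z I)`, which is minimal precisely when the Koszul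
syzygy lies in `𝔫 • ker d₁`.

To find such `a, b`, start with the Koszul syzygy of two basis elements `b, c` and a lift `f` of it
to `F₂`. If `f ∈ 𝔫 F₂`, the pair `b, c` will do. Otherwise some linear form `σ` has `σ f = 1`; by
means of `σ ∘ d₃`, which has entries in `𝔫`, two further basis elements can be modified by multiples
of `b` and `c` so that their Koszul syzygy lies in `𝔫 • ker d₁`. By prime avoidance `a, b` and a
third element may be changed modulo `𝔫 F₁` to make `x, y, z` a regular sequence.
-/

open IsLocalRing RingTheory.Sequence

section PrimeAvoidance

variable {R : Type*} [CommRing R]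

lemma exists_forall_add_mul_notMem (S : Finset (Ideal R)) {v : R}
    (hS : ∀ P ∈ S, P.IsPrime ∧ v ∉ P) (e : R) : ∃ s, ∀ P ∈ S, e + v * s ∉ P := by
  classical
  let T := S.filter (Maximal (· ∈ S))
  obtain ⟨s, hs_mem, hs_notMem⟩ :
      ∃ s ∈ (T.filter (e ∉ ·)).inf id, ∀ P ∈ T.filter (e ∈ ·), s ∉ P := by
    by_contra! hcover
    have hsubset : (((T.filter (e ∉ ·)).inf id : Ideal R) : Set R) ⊆
        ⋃ P ∈ (↑(T.filter (e ∈ ·)) : Set (Ideal R)), P := fun s hs ↦ by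
      simpa using hcover s hs
    obtain ⟨P, hP, hle⟩ := (Ideal.subset_union_prime (f := id) ⊥ ⊥ fun P hP _ _ ↦
      (hS P (by simp_all [T])).1).1 hsubset
    obtain ⟨P', hP', hP'P⟩ := ((hS P (by simp_all [T])).1.inf_le').1 hle
    simp only [T, Finset.mem_filter] at hP hP'
    exact hP'.2 (hP'.1.2.eq_of_le hP.1.1 hP'P ▸ hP.2)
  refine ⟨s, fun P hPS hmem ↦ ?_⟩
  obtain ⟨M, hPM, hM⟩ := S.exists_le_maximal hPS
  have hMT : M ∈ T := Finset.mem_filter.2 ⟨hM.1, hM⟩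
  obtain ⟨hMprime, hvM⟩ := hS M hM.1
  by_cases he : e ∈ M
  · exact (hMprime.mem_or_mem ((M.add_mem_iff_right he).1 (hPM hmem))).elim hvM
      (hs_notMem M (Finset.mem_filter.2 ⟨hMT, he⟩))
  · have hsM : s ∈ M := Finset.inf_le (f := id) (Finset.mem_filter.2 ⟨hMT, he⟩) hs_mem
    exact he ((M.add_mem_iff_left (M.mul_mem_left v hsM)).1 (hPM hmem))

lemma exists_isSMulRegular_add_mul [IsNoetherianRing R] {M : Type*} [AddCommGroup M] [Module R M]
    [Module.Finite R M] {v : R} (hv : IsSMulRegular M v) (e : R) :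
    ∃ s, IsSMulRegular M (e + v * s) := by
  have isSMulRegular_iff (r : R) : IsSMulRegular M r ↔ ∀ P ∈ associatedPrimes R M, r ∉ P := by
    simpa [not_iff_not] using
      (not_congr (Set.ext_iff.1 (biUnion_associatedPrimes_eq_compl_regular R M) r)).symm
  have hfin := associatedPrimes.finite R M
  obtain ⟨s, hs⟩ := exists_forall_add_mul_notMem hfin.toFinset (v := v) (fun P hP ↦
    have hP' := hfin.mem_toFinset.1 hP
    ⟨hP'.isPrime, (isSMulRegular_iff v).1 hv P hP'⟩) e
  exact ⟨s, (isSMulRegular_iff _).2 fun P hP ↦ hs P (hfin.mem_toFinset.2 hP)⟩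

end PrimeAvoidance

section RegularSequences

variable {R M : Type*} [CommRing R] [AddCommGroup M] [Module R M]

lemma mem_span_singleton_smul_top_iff {x : R} {v : M} :
    v ∈ Ideal.span {x} • (⊤ : Submodule R M) ↔ ∃ c, v = x • c := by
  simp [Submodule.ideal_span_singleton_smul, Submodule.mem_smul_pointwise_iff_exists, eq_comm]

lemma mem_span_pair_smul_top_iff {x y : R} {v : M} :
    v ∈ Ideal.span {x, y} • (⊤ : Submodule R M) ↔ ∃ c d, v = x • c + y • d := by
  simp [Ideal.span_insert, Submodule.sup_smul, Submodule.mem_sup,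
    mem_span_singleton_smul_top_iff, eq_comm]

lemma mem_span_triple_smul_top_iff {x y z : R} {v : M} :
    v ∈ Ideal.span {x, y, z} • (⊤ : Submodule R M) ↔ ∃ c d e, v = x • c + y • d + z • e := by
  rw [Ideal.span_insert, Submodule.sup_smul, Submodule.mem_sup]
  simp [mem_span_singleton_smul_top_iff, mem_span_pair_smul_top_iff, eq_comm, add_assoc]

lemma isWeaklyRegular_concat_iff (rs : List R) (r : R) :
    IsWeaklyRegular M (rs ++ [r]) ↔
      IsWeaklyRegular M rs ∧ IsSMulRegular (M ⧸ (Ideal.ofList rs • ⊤ : Submodule R M)) r := by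
  rw [isWeaklyRegular_append_iff, isWeaklyRegular_singleton_iff]

lemma isWeaklyRegular_triple_iff {x y z : R} :
    IsWeaklyRegular M [x, y, z] ↔ (∀ v : M, x • v = 0 → v = 0) ∧
      (∀ v u : M, y • v = x • u → ∃ c, v = x • c) ∧
      (∀ v a b : M, z • v = x • a + y • b → ∃ c d, v = x • c + y • d) := by
  have hsplit : [x, y, z] = ([x] ++ [y]) ++ [z] := rfl
  rw [hsplit, isWeaklyRegular_concat_iff, isWeaklyRegular_concat_iff,
    isWeaklyRegular_singleton_iff, isSMulRegular_iff_right_eq_zero_of_smul]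
  simp only [isSMulRegular_quotient_iff_mem_of_smul_mem, List.singleton_append, Ideal.ofList_cons,
    Ideal.ofList_nil, sup_bot_eq, ← Ideal.span_insert, mem_span_singleton_smul_top_iff,
    mem_span_pair_smul_top_iff, and_assoc, forall_exists_index]

lemma isWeaklyRegular_of_flat [Module.Flat R M] {rs : List R} (h : IsWeaklyRegular R rs) :
    IsWeaklyRegular M rs :=
  ((TensorProduct.rid R M).isWeaklyRegular_congr rs).1 (h.isWeaklyRegular_lTensor (M₂ := M))

lemma isSMulRegular_quotient_span_pair {x y z : R} (h : IsWeaklyRegular R [x, y, z]) :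
    IsSMulRegular (R ⧸ Ideal.span {x, y}) z := by
  have hz := ((isWeaklyRegular_concat_iff [x, y] z).1 h).2
  rwa [Ideal.smul_eq_mul, Ideal.mul_top, Ideal.ofList_cons, Ideal.ofList_singleton,
    ← Ideal.span_insert] at hz

lemma exists_eq_mul_of_isWeaklyRegular {x y z c d : R} (h : IsWeaklyRegular R [x, y, z])
    (hcd : c * x + d * y = 0) : ∃ l, c = -(l * y) ∧ d = l * x := by
  obtain ⟨hx, hy, -⟩ := isWeaklyRegular_triple_iff.1 h
  obtain ⟨l, hl⟩ := hy d (-c) (by simp only [smul_eq_mul]; linear_combination hcd)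
  rw [smul_eq_mul] at hl
  refine ⟨l, eq_neg_of_add_eq_zero_left (hx _ ?_), by rw [hl, mul_comm]⟩
  rw [smul_eq_mul]
  linear_combination hcd - y * hl

variable [IsLocalRing R]

lemma mem_maximalIdeal_of_isRegular {rs : List R} (h : IsRegular M rs) {r : R} (hr : r ∈ rs) :
    r ∈ maximalIdeal R := by
  have hne : Ideal.ofList rs ≠ ⊤ := fun htop ↦ h.top_ne_smul (by rw [htop, Submodule.top_smul])
  exact le_maximalIdeal hne (Ideal.subset_span hr)

lemma isRegular_concat_sq {rs : List R} {z : R} (h : IsRegular R (rs ++ [z])) :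
    IsRegular R (rs ++ [z * z]) := by
  rw [isRegular_iff_isWeaklyRegular_of_subset_maximalIdeal, isWeaklyRegular_concat_iff]
  · obtain ⟨hrs, hz⟩ := (isWeaklyRegular_concat_iff rs z).1 h.toIsWeaklyRegular
    exact ⟨hrs, hz.mul hz⟩
  · intro r hr
    rcases List.mem_append.1 hr with hr | hr
    · exact mem_maximalIdeal_of_isRegular h (List.mem_append_left _ hr)
    · rw [List.mem_singleton.1 hr]
      exact Ideal.mul_mem_left _ _ (mem_maximalIdeal_of_isRegular h (by simp))

variable [IsNoetherianRing R]

lemma exists_isRegular_cons_add_sq_mul {rs : List R} {z e : R} (h : IsRegular R (rs ++ [z]))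
    (he : e ∈ maximalIdeal R) : ∃ s, IsRegular R ((e + z * z * s) :: rs) := by
  have hsq := isRegular_concat_sq h
  obtain ⟨hrs, hz⟩ := (isWeaklyRegular_concat_iff rs _).1 hsq.toIsWeaklyRegular
  obtain ⟨s, hs⟩ := exists_isSMulRegular_add_mul hz e
  have hmem : ∀ r ∈ (e + z * z * s) :: rs, r ∈ maximalIdeal R := by
    rw [List.forall_mem_cons]
    exact ⟨add_mem he (Ideal.mul_mem_right _ _ (mem_maximalIdeal_of_isRegular hsq (by simp))),
      fun r hr ↦ mem_maximalIdeal_of_isRegular h (List.mem_append_left _ hr)⟩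
  have hperm : (rs ++ [e + z * z * s]).Perm ((e + z * z * s) :: rs) :=
    List.perm_append_singleton _ _
  exact ⟨s, (isRegular_iff_isWeaklyRegular_of_subset_maximalIdeal hmem).2 <|
    isWeaklyRegular_of_perm_of_subset_maximalIdeal ((isWeaklyRegular_concat_iff rs _).2 ⟨hrs, hs⟩)
      hperm fun r hr ↦ hmem r (hperm.mem_iff.1 hr)⟩

lemma exists_sub_mem_smul_top_isRegular_cons {F : Type*} [AddCommGroup F] [Module R F]
    (d : F →ₗ[R] R) {rs : List R} {c e : F} (h : IsRegular R (rs ++ [d c]))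
    (he : d e ∈ maximalIdeal R) :
    ∃ e', e' - e ∈ maximalIdeal R • (⊤ : Submodule R F) ∧ IsRegular R (d e' :: rs) := by
  obtain ⟨s, hs⟩ := exists_isRegular_cons_add_sq_mul h he
  refine ⟨e + d c • s • c, ?_, ?_⟩
  · rw [add_sub_cancel_left]
    exact Submodule.smul_mem_smul (mem_maximalIdeal_of_isRegular h (by simp)) trivial
  · convert hs using 2
    simp only [map_add, map_smul, smul_eq_mul]
    ring

end RegularSequences

lemma mem_smul_top_pi_iff {R ι : Type*} [CommRing R] [Finite ι] {𝔞 : Ideal R} {v : ι → R} :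
    v ∈ 𝔞 • (⊤ : Submodule R (ι → R)) ↔ ∀ i, v i ∈ 𝔞 := by
  refine ⟨fun hv i ↦ ?_, fun hv ↦ ?_⟩
  · simpa using Submodule.smul_top_le_comap_smul_top 𝔞 (LinearMap.proj i) hv
  · classical
    have := Fintype.ofFinite ι
    rw [pi_eq_sum_univ' v]
    exact Submodule.sum_mem _ fun i _ ↦ Submodule.smul_mem_smul (hv i) trivial

section Resolutions

variable {R F₁ F₂ F₃ : Type*} [CommRing R] [AddCommGroup F₁] [Module R F₁] [AddCommGroup F₂]
  [Module R F₂] [AddCommGroup F₃] [Module R F₃]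

/-- The complex `0 → F₃ → F₂ → F₁ → R` is exact, i.e. it resolves `R ⧸ range d₁`. The modules
`Fᵢ` are not required to be free. -/
structure IsResolution (d₁ : F₁ →ₗ[R] R) (d₂ : F₂ →ₗ[R] F₁) (d₃ : F₃ →ₗ[R] F₂) : Prop where
  exact₁ : Function.Exact d₂ d₁
  exact₂ : Function.Exact d₃ d₂
  injective : Function.Injective d₃

/-- An `IsResolution` over a local ring in which every differential maps into the maximal ideal
times its target. -/
structure IsMinimalResolution [IsLocalRing R] (d₁ : F₁ →ₗ[R] R) (d₂ : F₂ →ₗ[R] F₁)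
    (d₃ : F₃ →ₗ[R] F₂) : Prop extends IsResolution d₁ d₂ d₃ where
  apply₁_mem : ∀ v, d₁ v ∈ maximalIdeal R
  apply₂_mem : ∀ v, d₂ v ∈ maximalIdeal R • (⊤ : Submodule R F₁)
  apply₃_mem : ∀ v, d₃ v ∈ maximalIdeal R • (⊤ : Submodule R F₂)

variable {d₁ : F₁ →ₗ[R] R} {d₂ : F₂ →ₗ[R] F₁} {d₃ : F₃ →ₗ[R] F₂}

lemma HasResolutionFormat.exists_isMinimalResolution [IsLocalRing R] {I : Ideal R} {m n : ℕ}
    (h : HasResolutionFormat I m n) :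
    ∃ (d₁ : (Fin m → R) →ₗ[R] R) (d₂ : (Fin (m + n - 1) → R) →ₗ[R] (Fin m → R))
      (d₃ : (Fin n → R) →ₗ[R] (Fin (m + n - 1) → R)),
      LinearMap.range d₁ = I ∧ IsMinimalResolution d₁ d₂ d₃ := by
  obtain ⟨d₁, d₂, d₃, hI, h₁, h₂, h₃, hmin₁, hmin₂, hmin₃⟩ := h
  exact ⟨d₁, d₂, d₃, hI, {
    exact₁ := LinearMap.exact_iff.2 h₁.symm
    exact₂ := LinearMap.exact_iff.2 h₂.symm
    injective := LinearMap.ker_eq_bot.1 h₃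
    apply₁_mem := fun v ↦ hmin₁ (hI.le ⟨v, rfl⟩)
    apply₂_mem := fun v ↦ hmin₂ ⟨v, rfl⟩
    apply₃_mem := fun v ↦ hmin₃ ⟨v, rfl⟩ }⟩

lemma IsMinimalResolution.hasResolutionFormat [IsLocalRing R] [Module.Free R F₁]
    [Module.Finite R F₁] [Module.Free R F₂] [Module.Finite R F₂] [Module.Free R F₃]
    [Module.Finite R F₃] (h : IsMinimalResolution d₁ d₂ d₃) {m n : ℕ} (h₁ : Module.finrank R F₁ = m)
    (h₂ : Module.finrank R F₂ = m + n - 1) (h₃ : Module.finrank R F₃ = n) :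
    HasResolutionFormat (LinearMap.range d₁) m n := by
  let e₁ : (Fin m → R) ≃ₗ[R] F₁ := .ofFinrankEq _ _ (by simp [h₁])
  let e₂ : (Fin (m + n - 1) → R) ≃ₗ[R] F₂ := .ofFinrankEq _ _ (by simp [h₂])
  let e₃ : (Fin n → R) ≃ₗ[R] F₃ := .ofFinrankEq _ _ (by simp [h₃])
  refine ⟨d₁ ∘ₗ e₁, e₁.symm ∘ₗ d₂ ∘ₗ e₂, e₂.symm ∘ₗ d₃ ∘ₗ e₃, ?_, ?_, ?_, ?_, ?_, ?_, ?_⟩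
  · rw [LinearMap.range_comp_of_range_eq_top _ e₁.range]
  · refine (LinearMap.exact_iff.1 fun v ↦ ?_).symm
    simp [h.exact₁ (e₁ v), e₂.surjective.exists, LinearEquiv.symm_apply_eq]
  · refine (LinearMap.exact_iff.1 fun v ↦ ?_).symm
    simp [h.exact₂ (e₂ v), e₃.surjective.exists, LinearEquiv.symm_apply_eq]
  · exact LinearMap.ker_eq_bot.2 (e₂.symm.injective.comp (h.injective.comp e₃.injective))
  · rintro _ ⟨v, rfl⟩
    exact h.apply₁_mem v
  · rintro _ ⟨v, rfl⟩
    exact Submodule.smul_top_le_comap_smul_top _ e₁.symm.toLinearMap (h.apply₂_mem (e₂ v))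
  · rintro _ ⟨v, rfl⟩
    exact Submodule.smul_top_le_comap_smul_top _ e₂.symm.toLinearMap (h.apply₃_mem (e₃ v))

end Resolutions

section Koszul

variable {R F₁ F₂ F₃ : Type*} [CommRing R] [AddCommGroup F₁] [Module R F₁] [AddCommGroup F₂]
  [Module R F₂] [AddCommGroup F₃] [Module R F₃]
  {d₁ : F₁ →ₗ[R] R} {d₂ : F₂ →ₗ[R] F₁} {d₃ : F₃ →ₗ[R] F₂}

/-- The Koszul syzygy `d₁ a • b - d₁ b • a` of `d₁`, as a linear map in `b`. -/
def koszulSyzygy (d₁ : F₁ →ₗ[R] R) (a : F₁) : F₁ →ₗ[R] F₁ :=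
  d₁ a • LinearMap.id - d₁.smulRight a

lemma koszulSyzygy_apply (a b : F₁) : koszulSyzygy d₁ a b = d₁ a • b - d₁ b • a := rfl

lemma koszulSyzygy_mem_ker (a b : F₁) : koszulSyzygy d₁ a b ∈ LinearMap.ker d₁ := by
  simp [koszulSyzygy_apply, mul_comm]

lemma koszulSyzygy_mem_smul_ker {𝔞 : Ideal R} (a : F₁) {v : F₁}
    (hv : v ∈ 𝔞 • (⊤ : Submodule R F₁)) : koszulSyzygy d₁ a v ∈ 𝔞 • LinearMap.ker d₁ := by
  have hmap := Submodule.mem_map_of_mem (f := koszulSyzygy d₁ a) hv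
  rw [Submodule.map_smul''] at hmap
  refine Submodule.smul_mono le_rfl ?_ hmap
  rintro _ ⟨b, -, rfl⟩
  exact koszulSyzygy_mem_ker a b

lemma koszulSyzygy_mem_smul_ker_of_sub_mem {𝔞 : Ideal R} {a b a' b' : F₁}
    (h : koszulSyzygy d₁ a b ∈ 𝔞 • LinearMap.ker d₁)
    (ha : a' - a ∈ 𝔞 • (⊤ : Submodule R F₁)) (hb : b' - b ∈ 𝔞 • (⊤ : Submodule R F₁)) :
    koszulSyzygy d₁ a' b' ∈ 𝔞 • LinearMap.ker d₁ := by
  have hsplit : koszulSyzygy d₁ a' b' = koszulSyzygy d₁ a b - koszulSyzygy d₁ b (a' - a) +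
      koszulSyzygy d₁ a' (b' - b) := by
    simp only [koszulSyzygy_apply, map_sub]
    module
  rw [hsplit]
  exact add_mem (sub_mem h (koszulSyzygy_mem_smul_ker b ha)) (koszulSyzygy_mem_smul_ker a' hb)

lemma exists_lift_koszulSyzygy (h : Function.Exact d₂ d₁) (a b : F₁) :
    ∃ f, d₂ f = koszulSyzygy d₁ a b :=
  (h _).1 (koszulSyzygy_mem_ker a b)

lemma mem_smul_ker_iff (h : Function.Exact d₂ d₁) {𝔞 : Ideal R} {v : F₁} :
    v ∈ 𝔞 • LinearMap.ker d₁ ↔ ∃ g ∈ 𝔞 • (⊤ : Submodule R F₂), d₂ g = v := by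
  rw [h.linearMap_ker_eq, LinearMap.range_eq_map, ← Submodule.map_smul'', Submodule.mem_map]

/-- The data of a comparison map from the Koszul complex on `d₁ a, d₁ b, d₁ c` to the complex
`(d₁, d₂, d₃)`: in degree two it sends the basis to `f_ab, f_ac, f_bc`, in degree three to `w`. -/
structure IsKoszulLift (d₁ : F₁ →ₗ[R] R) (d₂ : F₂ →ₗ[R] F₁) (d₃ : F₃ →ₗ[R] F₂) (a b c : F₁)
    (f_ab f_ac f_bc : F₂) (w : F₃) : Prop where
  apply_ab : d₂ f_ab = koszulSyzygy d₁ a b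
  apply_ac : d₂ f_ac = koszulSyzygy d₁ a c
  apply_bc : d₂ f_bc = koszulSyzygy d₁ b c
  apply_top : d₃ w = d₁ a • f_bc - d₁ b • f_ac + d₁ c • f_ab

lemma exists_isKoszulLift_of_apply_eq (h : Function.Exact d₃ d₂) {a b c : F₁}
    {f_ab f_ac f_bc : F₂} (hab : d₂ f_ab = koszulSyzygy d₁ a b)
    (hac : d₂ f_ac = koszulSyzygy d₁ a c) (hbc : d₂ f_bc = koszulSyzygy d₁ b c) :
    ∃ w, IsKoszulLift d₁ d₂ d₃ a b c f_ab f_ac f_bc w := by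
  obtain ⟨w, hw⟩ := (h (d₁ a • f_bc - d₁ b • f_ac + d₁ c • f_ab)).1 (by
    simp only [map_add, map_sub, map_smul, hab, hac, hbc, koszulSyzygy_apply]
    module)
  exact ⟨w, hab, hac, hbc, hw⟩

namespace IsResolution

lemma exists_isKoszulLift (h : IsResolution d₁ d₂ d₃) (a : F₁) {b c : F₁} {f_bc : F₂}
    (hbc : d₂ f_bc = koszulSyzygy d₁ b c) :
    ∃ f_ab f_ac w, IsKoszulLift d₁ d₂ d₃ a b c f_ab f_ac f_bc w := by
  obtain ⟨f_ab, hab⟩ := exists_lift_koszulSyzygy h.exact₁ a b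
  obtain ⟨f_ac, hac⟩ := exists_lift_koszulSyzygy h.exact₁ a c
  exact ⟨f_ab, f_ac, exists_isKoszulLift_of_apply_eq h.exact₂ hab hac hbc⟩

-- The Koszul relation in degree four, which survives because `d₃` is injective.
lemma smul_sub_smul_mem_of_isKoszulLift (h : IsResolution d₁ d₂ d₃) {u v b c : F₁}
    {f_ub f_uc f_vb f_vc f_bc : F₂} {k l : F₃}
    (hu : IsKoszulLift d₁ d₂ d₃ u b c f_ub f_uc f_bc k)
    (hv : IsKoszulLift d₁ d₂ d₃ v b c f_vb f_vc f_bc l) :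
    d₁ u • l - d₁ v • k ∈ Ideal.span {d₁ b, d₁ c} • (⊤ : Submodule R F₃) := by
  obtain ⟨f_uv, huv⟩ := exists_lift_koszulSyzygy h.exact₁ u v
  obtain ⟨k_b, hk_b⟩ := exists_isKoszulLift_of_apply_eq h.exact₂ huv hu.apply_ab hv.apply_ab
  obtain ⟨k_c, hk_c⟩ := exists_isKoszulLift_of_apply_eq h.exact₂ huv hu.apply_ac hv.apply_ac
  refine mem_span_pair_smul_top_iff.2 ⟨-k_c, k_b, h.injective ?_⟩
  simp only [map_add, map_sub, map_neg, map_smul, hu.apply_top, hv.apply_top, hk_b.apply_top,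
    hk_c.apply_top]
  module

lemma smul_mem_of_isKoszulLift (h : IsResolution d₁ d₂ d₃) {a b c : F₁}
    {f_ab f_ac f_bc : F₂} {w : F₃}
    (hw : IsKoszulLift d₁ d₂ d₃ a b c f_ab f_ac f_bc w) (v : F₁) :
    d₁ v • w ∈ Ideal.span {d₁ a, d₁ b, d₁ c} • (⊤ : Submodule R F₃) := by
  obtain ⟨f_vb, f_vc, l, hl⟩ := h.exists_isKoszulLift v hw.apply_bc
  obtain ⟨k, k', hk⟩ := mem_span_pair_smul_top_iff.1 (h.smul_sub_smul_mem_of_isKoszulLift hl hw)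
  exact mem_span_triple_smul_top_iff.2 ⟨l, k, k', by linear_combination (norm := module) hk⟩

lemma mem_range_of_smul_mem [Module.Flat R F₁] [Module.Flat R F₂]
    (h : IsResolution d₁ d₂ d₃) {a b c : F₁} {f_ab f_ac f_bc : F₂} {w : F₃}
    (hw : IsKoszulLift d₁ d₂ d₃ a b c f_ab f_ac f_bc w)
    (hreg : IsWeaklyRegular R [d₁ a, d₁ b, d₁ c]) {s : R}
    (hs : s • w ∈ Ideal.span {d₁ a, d₁ b, d₁ c} • (⊤ : Submodule R F₃)) :
    s ∈ LinearMap.range d₁ := by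
  obtain ⟨k_a, k_b, k_c, hk⟩ := mem_span_triple_smul_top_iff.1 hs
  have hd₃ := congrArg d₃ hk
  simp only [map_add, map_smul, hw.apply_top] at hd₃
  obtain ⟨g_a, g_b, hg⟩ := (isWeaklyRegular_triple_iff.1 (isWeaklyRegular_of_flat hreg)).2.2
    (s • f_ab - d₃ k_c) (-(s • f_bc - d₃ k_a)) (s • f_ac + d₃ k_b)
    (by linear_combination (norm := module) hd₃)
  have hd₂ := congrArg d₂ hg
  simp only [map_add, map_sub, map_smul, hw.apply_ab, koszulSyzygy_apply,
    h.exact₂.apply_apply_eq_zero] at hd₂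
  obtain ⟨t, ht⟩ := (isWeaklyRegular_triple_iff.1 (isWeaklyRegular_of_flat hreg)).2.1
    (s • a + d₂ g_b) (s • b - d₂ g_a) (by linear_combination (norm := module) -hd₂)
  have hd₁ := congrArg d₁ ht
  simp only [map_add, map_smul, h.exact₁.apply_apply_eq_zero, smul_eq_mul] at hd₁
  have hst := (isWeaklyRegular_triple_iff.1 hreg).1 (d₁ t - s) (by
    rw [smul_eq_mul]
    linear_combination -hd₁)
  exact ⟨t, sub_eq_zero.1 hst⟩

end IsResolution

end Koszul

section Linkage

variable {R : Type*} [CommRing R]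

/-- The basic double link `(x, y) + z I` of the ideal `I`; for `x, y, z ∈ I` a regular sequence it
is linked to `I` in two steps. -/
def basicDoubleLink (I : Ideal R) (x y z : R) : Ideal R :=
  Ideal.span {x, y} ⊔ Ideal.span {z} * I

lemma mem_sup_span_singleton_iff {L : Ideal R} {z s : R} :
    s ∈ L ⊔ Ideal.span {z} ↔ ∃ c, s - c * z ∈ L := by
  rw [sup_comm, Ideal.mem_span_singleton_sup]
  exact ⟨fun ⟨c, l, hl, hs⟩ ↦ ⟨c, by rwa [← hs, add_sub_cancel_left]⟩,
    fun ⟨c, hc⟩ ↦ ⟨c, _, hc, add_sub_cancel _ _⟩⟩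

lemma colon_sup_span_mul_self {L J : Ideal R} {z : R} (hz : IsSMulRegular (R ⧸ L) z)
    (hzJ : z ∈ J) :
    (L ⊔ Ideal.span {z * z}).colon J =
      L ⊔ Ideal.span {z} * (L ⊔ Ideal.span {z}).colon J := by
  have hcancel (s : R) : z * s ∈ L → s ∈ L :=
    (isSMulRegular_quotient_iff_mem_of_smul_mem L z).1 hz s
  apply le_antisymm
  · intro s hs
    have hs' (j : R) (hj : j ∈ J) : ∃ c, s * j - c * (z * z) ∈ L :=
      mem_sup_span_singleton_iff.1 (Submodule.mem_colon.1 hs j hj)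
    obtain ⟨c, hc⟩ := hs' z hzJ
    have hsc : s - c * z ∈ L := hcancel _ (by convert hc using 1; ring)
    have hc_mem : c ∈ (L ⊔ Ideal.span {z}).colon J := by
      refine Submodule.mem_colon.2 fun j hj ↦ mem_sup_span_singleton_iff.2 ?_
      obtain ⟨c', hc'⟩ := hs' j hj
      refine ⟨c', hcancel _ ?_⟩
      convert sub_mem hc' (L.mul_mem_right j hsc) using 1
      rw [smul_eq_mul]
      ring
    rw [← sub_add_cancel s (c * z), mul_comm c z]
    exact Submodule.add_mem_sup (by rwa [mul_comm z c])
      (Ideal.mul_mem_mul (Ideal.mem_span_singleton_self z) hc_mem)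
  · refine sup_le (le_sup_left.trans Ideal.le_colon) ?_
    rw [Ideal.span_singleton_mul_le_iff]
    refine fun t ht ↦ Submodule.mem_colon.2 fun j hj ↦ mem_sup_span_singleton_iff.2 ?_
    obtain ⟨c, hc⟩ := mem_sup_span_singleton_iff.1 (Submodule.mem_colon.1 ht j hj)
    refine ⟨c, ?_⟩
    convert L.mul_mem_left z hc using 1
    simp only [smul_eq_mul]
    ring

lemma span_triple_eq_sup (x y z : R) :
    Ideal.span {x, y, z} = Ideal.span {x, y} ⊔ Ideal.span {z} := by
  rw [← Ideal.span_union, Set.insert_union, Set.singleton_union]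

variable {F₁ F₂ ι : Type*} [AddCommGroup F₁] [Module R F₁] [Module.Flat R F₁] [AddCommGroup F₂]
  [Module R F₂] [Module.Flat R F₂] [Finite ι]
  {d₁ : F₁ →ₗ[R] R} {d₂ : F₂ →ₗ[R] F₁} {d₃ : (ι → R) →ₗ[R] F₂}

lemma IsResolution.colon_colon_eq (h : IsResolution d₁ d₂ d₃) {a b c : F₁}
    (hreg : IsWeaklyRegular R [d₁ a, d₁ b, d₁ c]) :
    (Ideal.span {d₁ a, d₁ b, d₁ c}).colon
      ((Ideal.span {d₁ a, d₁ b, d₁ c}).colon (LinearMap.range d₁ : Ideal R) : Ideal R) =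
        LinearMap.range d₁ := by
  obtain ⟨f_bc, hbc⟩ := exists_lift_koszulSyzygy h.exact₁ b c
  obtain ⟨f_ab, f_ac, w, hw⟩ := h.exists_isKoszulLift a hbc
  set K := Ideal.span {d₁ a, d₁ b, d₁ c}
  have hw_mem (i : ι) : w i ∈ K.colon (LinearMap.range d₁ : Ideal R) := by
    refine Submodule.mem_colon.2 ?_
    rintro _ ⟨v, rfl⟩
    rw [smul_eq_mul, mul_comm]
    exact mem_smul_top_pi_iff.1 (h.smul_mem_of_isKoszulLift hw v) i
  apply le_antisymm
  · intro s hs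
    exact h.mem_range_of_smul_mem hw hreg
      (mem_smul_top_pi_iff.2 fun i ↦ Submodule.mem_colon.1 hs _ (hw_mem i))
  · refine fun s hs ↦ Submodule.mem_colon.2 fun t ht ↦ ?_
    rw [smul_eq_mul, mul_comm]
    exact Submodule.mem_colon.1 ht s hs

lemma IsResolution.linked_basicDoubleLink [IsLocalRing R] (h : IsResolution d₁ d₂ d₃) {a b c : F₁}
    (hreg : IsRegular R [d₁ a, d₁ b, d₁ c]) :
    Linked (LinearMap.range d₁ : Ideal R)
      (basicDoubleLink (LinearMap.range d₁ : Ideal R) (d₁ a) (d₁ b) (d₁ c)) := by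
  set I : Ideal R := LinearMap.range d₁
  set K := Ideal.span {d₁ a, d₁ b, d₁ c}
  have hK : K ≤ K.colon I := Ideal.le_colon
  have hI : DirectlyLinked I (K.colon I) :=
    ⟨d₁ a, d₁ b, d₁ c, ⟨a, rfl⟩, ⟨b, rfl⟩, ⟨c, rfl⟩, hreg, rfl⟩
  have hJ : DirectlyLinked (K.colon I) (basicDoubleLink I (d₁ a) (d₁ b) (d₁ c)) := by
    have hc : d₁ c ∈ K.colon I := hK (Ideal.subset_span (by simp))
    refine ⟨d₁ a, d₁ b, d₁ c * d₁ c, hK (Ideal.subset_span (by simp)),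
      hK (Ideal.subset_span (by simp)), Ideal.mul_mem_left _ _ hc,
      isRegular_concat_sq (rs := [d₁ a, d₁ b]) hreg, ?_⟩
    rw [span_triple_eq_sup, colon_sup_span_mul_self
      (isSMulRegular_quotient_span_pair hreg.toIsWeaklyRegular) hc, ← span_triple_eq_sup,
      h.colon_colon_eq hreg.toIsWeaklyRegular, basicDoubleLink]
  exact (Relation.ReflTransGen.single hI).tail hJ

end Linkage

section UnimodularPairs

variable {R F : Type*} [CommRing R] [AddCommGroup F] [Module R F]

/-- The linear forms `p, q` are dual to `a, b`; they split off `a, b` as part of a basis. -/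
structure IsDualPair (p q : F →ₗ[R] R) (a b : F) : Prop where
  apply_left_left : p a = 1
  apply_left_right : p b = 0
  apply_right_left : q a = 0
  apply_right_right : q b = 1

lemma exists_isDualPair {p q : F →ₗ[R] R} {a b : F} (h : IsUnit (p a * q b - p b * q a)) :
    ∃ p' q' : F →ₗ[R] R, IsDualPair p' q' a b := by
  obtain ⟨δ, hδ⟩ := h.exists_left_inv
  refine ⟨δ • (q b • p - p b • q), δ • (p a • q - q a • p), ⟨?_, ?_, ?_, ?_⟩⟩ <;>
    simp only [LinearMap.smul_apply, LinearMap.sub_apply, smul_eq_mul]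
  · linear_combination hδ
  · ring
  · ring
  · linear_combination hδ

lemma IsDualPair.exists_of_sub_mem [IsLocalRing R] {p q : F →ₗ[R] R} {a b a' b' : F}
    (h : IsDualPair p q a b) (ha : a' - a ∈ maximalIdeal R • (⊤ : Submodule R F))
    (hb : b' - b ∈ maximalIdeal R • (⊤ : Submodule R F)) :
    ∃ p' q' : F →ₗ[R] R, IsDualPair p' q' a' b' := by
  have residue_eq (f : F →ₗ[R] R) {v v' : F} (hv : v' - v ∈ maximalIdeal R • (⊤ : Submodule R F)) :
      residue R (f v') = residue R (f v) := by
    have hmem : f (v' - v) ∈ maximalIdeal R := by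
      simpa using Submodule.smul_top_le_comap_smul_top _ f hv
    rwa [← residue_eq_zero_iff, map_sub, map_sub, sub_eq_zero] at hmem
  refine exists_isDualPair (p := p) (q := q) ((residue_ne_zero_iff_isUnit _).1 ?_)
  simp [residue_eq _ ha, residue_eq _ hb, h.apply_left_left, h.apply_left_right,
    h.apply_right_left, h.apply_right_right]

end UnimodularPairs

namespace BasicDoubleLink

variable {R F₁ F₂ F₃ : Type*} [CommRing R] [AddCommGroup F₁] [Module R F₁] [AddCommGroup F₂]
  [Module R F₂] [AddCommGroup F₃] [Module R F₃]

/-- The map multiplying the summand spanned by `a, b` by `z` and fixing the common kernel of the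
dual forms `p, q`. -/
def rescale (p q : F₁ →ₗ[R] R) (a b : F₁) (z : R) : F₁ →ₗ[R] F₁ :=
  LinearMap.id + (z - 1) • (p.smulRight a + q.smulRight b)

/-- The first differential of the resolution of the basic double link of `range d₁` along
`d₁ a, d₁ b, z`: it agrees with `d₁` on `a, b` and with `z • d₁` on the common kernel of the dual
forms `p, q`. -/
def diff₁ (d₁ : F₁ →ₗ[R] R) (p q : F₁ →ₗ[R] R) (a b : F₁) (z : R) : F₁ →ₗ[R] R :=
  z • d₁ + (1 - z) • (d₁ a • p + d₁ b • q)

/-- The second differential of the resolution of the basic double link: the Koszul syzygy of `a, b`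
is adjoined to the rescaled syzygies of `d₁`. -/
def diff₂ (d₁ : F₁ →ₗ[R] R) (d₂ : F₂ →ₗ[R] F₁) (p q : F₁ →ₗ[R] R) (a b : F₁) (z : R) :
    R × F₂ →ₗ[R] F₁ :=
  (LinearMap.toSpanSingleton R F₁ (koszulSyzygy d₁ a b)).coprod (rescale p q a b z ∘ₗ d₂)

/-- The third differential of the resolution of the basic double link, where `g` is a lift of the
Koszul syzygy of `a, b` along `d₂`. -/
def diff₃ (d₃ : F₃ →ₗ[R] F₂) (g : F₂) (z : R) : R × F₃ →ₗ[R] R × F₂ :=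
  (-z • LinearMap.fst R R F₃).prod ((LinearMap.toSpanSingleton R F₂ g).coprod d₃)

variable {d₁ : F₁ →ₗ[R] R} {d₂ : F₂ →ₗ[R] F₁} {d₃ : F₃ →ₗ[R] F₂} {p q : F₁ →ₗ[R] R} {a b : F₁}
  {z : R} {g : F₂}

lemma rescale_apply (v : F₁) :
    rescale p q a b z v = v + (z - 1) • (p v • a + q v • b) := rfl

lemma diff₁_apply (v : F₁) :
    diff₁ d₁ p q a b z v = z * d₁ v + (1 - z) * (d₁ a * p v + d₁ b * q v) := rfl

lemma diff₂_apply (l : R) (f : F₂) :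
    diff₂ d₁ d₂ p q a b z (l, f) = l • koszulSyzygy d₁ a b + rescale p q a b z (d₂ f) := rfl

lemma diff₃_apply (l : R) (k : F₃) : diff₃ d₃ g z (l, k) = (-z * l, l • g + d₃ k) := rfl

lemma rescale_left (hpq : IsDualPair p q a b) : rescale p q a b z a = z • a := by
  rw [rescale_apply, hpq.apply_left_left, hpq.apply_right_left]
  module

lemma rescale_right (hpq : IsDualPair p q a b) : rescale p q a b z b = z • b := by
  rw [rescale_apply, hpq.apply_left_right, hpq.apply_right_right]
  module

lemma left_rescale (hpq : IsDualPair p q a b) (v : F₁) : p (rescale p q a b z v) = z * p v := by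
  simp only [rescale_apply, map_add, map_smul, smul_eq_mul, hpq.apply_left_left,
    hpq.apply_left_right]
  ring

lemma right_rescale (hpq : IsDualPair p q a b) (v : F₁) : q (rescale p q a b z v) = z * q v := by
  simp only [rescale_apply, map_add, map_smul, smul_eq_mul, hpq.apply_right_left,
    hpq.apply_right_right]
  ring

lemma left_koszulSyzygy (hpq : IsDualPair p q a b) : p (koszulSyzygy d₁ a b) = -d₁ b := by
  simp [koszulSyzygy_apply, hpq.apply_left_left, hpq.apply_left_right]

lemma right_koszulSyzygy (hpq : IsDualPair p q a b) : q (koszulSyzygy d₁ a b) = d₁ a := by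
  simp [koszulSyzygy_apply, hpq.apply_right_left, hpq.apply_right_right]

lemma diff₁_left (hpq : IsDualPair p q a b) : diff₁ d₁ p q a b z a = d₁ a := by
  rw [diff₁_apply, hpq.apply_left_left, hpq.apply_right_left]
  ring

lemma diff₁_right (hpq : IsDualPair p q a b) : diff₁ d₁ p q a b z b = d₁ b := by
  rw [diff₁_apply, hpq.apply_left_right, hpq.apply_right_right]
  ring

lemma diff₁_rescale (hpq : IsDualPair p q a b) (v : F₁) :
    diff₁ d₁ p q a b z (rescale p q a b z v) = z * d₁ v := by
  rw [rescale_apply]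
  simp only [map_add, map_smul, smul_eq_mul, diff₁_left hpq, diff₁_right hpq]
  rw [diff₁_apply]
  ring

lemma range_diff₁ (hpq : IsDualPair p q a b) :
    LinearMap.range (diff₁ d₁ p q a b z) =
      basicDoubleLink (LinearMap.range d₁) (d₁ a) (d₁ b) z := by
  apply le_antisymm
  · rintro _ ⟨v, rfl⟩
    rw [diff₁_apply, add_comm]
    exact Submodule.add_mem_sup
      (Ideal.mem_span_pair.2 ⟨(1 - z) * p v, (1 - z) * q v, by ring⟩)
      (Ideal.mul_mem_mul (Ideal.mem_span_singleton_self z) ⟨v, rfl⟩)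
  · refine sup_le (Ideal.span_le.2 ?_) (Ideal.span_singleton_mul_le_iff.2 ?_)
    · rintro _ (rfl | rfl)
      · exact ⟨a, diff₁_left hpq⟩
      · exact ⟨b, diff₁_right hpq⟩
    · rintro _ ⟨v, rfl⟩
      exact ⟨rescale p q a b z v, diff₁_rescale hpq v⟩

lemma exact_diff₂_diff₁ (hpq : IsDualPair p q a b) (h : Function.Exact d₂ d₁)
    (hreg : IsWeaklyRegular R [d₁ a, d₁ b, z]) :
    Function.Exact (diff₂ d₁ d₂ p q a b z) (diff₁ d₁ p q a b z) := by
  intro v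
  constructor
  · intro hv
    rw [diff₁_apply] at hv
    obtain ⟨c, d, hcd⟩ := (isWeaklyRegular_triple_iff.1 hreg).2.2
      (d₁ (v - p v • a - q v • b)) (-p v) (-q v) (by
        simp only [map_sub, map_smul, smul_eq_mul]
        linear_combination hv)
    simp only [map_sub, map_smul, smul_eq_mul] at hcd
    obtain ⟨f, hf⟩ := (h (v - (p v + c) • a - (q v + d) • b)).1 (by
      simp only [map_sub, map_smul, smul_eq_mul]
      linear_combination hcd)
    obtain ⟨l, hc, hd⟩ := exists_eq_mul_of_isWeaklyRegular hreg
      (c := p v + z * c) (d := q v + z * d) (by linear_combination hv - z * hcd)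
    refine ⟨(l, f), ?_⟩
    have hl : l • koszulSyzygy d₁ a b = (p v + z * c) • a + (q v + z * d) • b := by
      rw [hc, hd, koszulSyzygy_apply]
      module
    rw [diff₂_apply, hf, hl, map_sub, map_sub, map_smul, map_smul, rescale_left hpq,
      rescale_right hpq, rescale_apply]
    module
  · rintro ⟨⟨l, f⟩, rfl⟩
    rw [diff₂_apply, map_add, diff₁_rescale hpq, h.apply_apply_eq_zero, koszulSyzygy_apply]
    simp only [map_smul, map_sub, diff₁_left hpq, diff₁_right hpq, smul_eq_mul]
    ring

lemma exact_diff₃_diff₂ (hpq : IsDualPair p q a b) (h : IsResolution d₁ d₂ d₃)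
    (hreg : IsWeaklyRegular R [d₁ a, d₁ b, z]) (hg : d₂ g = koszulSyzygy d₁ a b) :
    Function.Exact (diff₃ d₃ g z) (diff₂ d₁ d₂ p q a b z) := by
  rintro ⟨l, f⟩
  constructor
  · intro hf
    rw [diff₂_apply] at hf
    have hp := congrArg p hf
    have hq := congrArg q hf
    simp only [map_add, map_smul, map_zero, left_rescale hpq, right_rescale hpq,
      left_koszulSyzygy hpq, right_koszulSyzygy hpq, smul_eq_mul] at hp hq
    have hd₂f : d₂ f = p (d₂ f) • a + q (d₂ f) • b := by
      have ha := congrArg (· • a) hp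
      have hb := congrArg (· • b) hq
      rw [koszulSyzygy_apply, rescale_apply] at hf
      linear_combination (norm := module) hf - ha - hb
    have hd₁ := h.exact₁.apply_apply_eq_zero f
    rw [hd₂f, map_add, map_smul, map_smul, smul_eq_mul, smul_eq_mul] at hd₁
    obtain ⟨μ, hpμ, hqμ⟩ := exists_eq_mul_of_isWeaklyRegular hreg hd₁
    have hl := (isWeaklyRegular_triple_iff.1 hreg).1 (l + z * μ) (by
      rw [smul_eq_mul]
      linear_combination hq - z * hqμ)
    obtain ⟨k, hk⟩ := (h.exact₂ (f - μ • g)).1 (by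
      rw [map_sub, map_smul, hg, hd₂f, hpμ, hqμ, koszulSyzygy_apply]
      module)
    refine ⟨(μ, k), ?_⟩
    rw [diff₃_apply, hk, eq_neg_of_add_eq_zero_left hl, neg_mul, add_sub_cancel]
  · rintro ⟨⟨l', k⟩, hk⟩
    rw [← hk, diff₃_apply, diff₂_apply, map_add, map_smul, hg, h.exact₂.apply_apply_eq_zero,
      add_zero, map_smul, koszulSyzygy_apply, map_sub, map_smul, map_smul, rescale_left hpq,
      rescale_right hpq]
    module

lemma injective_diff₃ (hpq : IsDualPair p q a b) (h : IsResolution d₁ d₂ d₃)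
    (ha : IsSMulRegular R (d₁ a)) (hg : d₂ g = koszulSyzygy d₁ a b) :
    Function.Injective (diff₃ d₃ g z) := by
  rw [injective_iff_map_eq_zero]
  rintro ⟨l, k⟩ hlk
  rw [diff₃_apply] at hlk
  have hsnd : l • g + d₃ k = 0 := congrArg Prod.snd hlk
  have hq := congrArg (q ∘ₗ d₂) hsnd
  simp only [LinearMap.comp_apply, map_add, map_smul, map_zero, hg, right_koszulSyzygy hpq,
    h.exact₂.apply_apply_eq_zero, add_zero, smul_eq_mul] at hq
  have hl : l = 0 := ha.right_eq_zero_of_smul (by rwa [smul_eq_mul, mul_comm])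
  rw [hl, zero_smul, zero_add] at hsnd
  rw [hl, (injective_iff_map_eq_zero d₃).1 h.injective k hsnd, Prod.mk_zero_zero]

lemma isMinimalResolution [IsLocalRing R] (hpq : IsDualPair p q a b)
    (h : IsMinimalResolution d₁ d₂ d₃) (hreg : IsRegular R [d₁ a, d₁ b, z])
    (hg : d₂ g = koszulSyzygy d₁ a b) (hg_mem : g ∈ maximalIdeal R • (⊤ : Submodule R F₂)) :
    IsMinimalResolution (diff₁ d₁ p q a b z) (diff₂ d₁ d₂ p q a b z) (diff₃ d₃ g z) := by
  have hz : z ∈ maximalIdeal R := mem_maximalIdeal_of_isRegular hreg (by simp)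
  exact {
    exact₁ := exact_diff₂_diff₁ hpq h.exact₁ hreg.toIsWeaklyRegular
    exact₂ := exact_diff₃_diff₂ hpq h.toIsResolution hreg.toIsWeaklyRegular hg
    injective := injective_diff₃ hpq h.toIsResolution
      ((isWeaklyRegular_cons_iff _ _ _).1 hreg.toIsWeaklyRegular).1 hg
    apply₁_mem := fun v ↦ by
      rw [diff₁_apply]
      exact add_mem (Ideal.mul_mem_right _ _ hz) (Ideal.mul_mem_left _ _ (add_mem
        (Ideal.mul_mem_right _ _ (h.apply₁_mem a)) (Ideal.mul_mem_right _ _ (h.apply₁_mem b))))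
    apply₂_mem := fun ⟨l, f⟩ ↦ by
      rw [diff₂_apply, ← hg]
      exact add_mem (Submodule.smul_mem _ _ (h.apply₂_mem g))
        (Submodule.smul_top_le_comap_smul_top _ (rescale p q a b z) (h.apply₂_mem f))
    apply₃_mem := fun ⟨l, k⟩ ↦ by
      have hsplit : diff₃ d₃ g z (l, k) =
          z • (-l, (0 : F₂)) + LinearMap.inr R R F₂ (l • g + d₃ k) := by
        simp [diff₃_apply]
      rw [hsplit]
      exact add_mem (Submodule.smul_mem_smul hz trivial) (Submodule.smul_top_le_comap_smul_top _
        (LinearMap.inr R R F₂) (add_mem (Submodule.smul_mem _ _ hg_mem) (h.apply₃_mem k))) }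

end BasicDoubleLink

section VanishingProducts

open Matrix

variable {R F₁ F₂ ι : Type*} [CommRing R] [AddCommGroup F₁] [Module R F₁] [AddCommGroup F₂]
  [Module R F₂] {d₁ : F₁ →ₗ[R] R} {d₂ : F₂ →ₗ[R] F₁}

lemma minor_mem_of_isSMulRegular {L : Ideal R} {x y : R} (hx : IsSMulRegular (R ⧸ L) x)
    {k l : ι → R} (h : ∀ i, x * l i - y * k i ∈ L) (i j : ι) : k i * l j - k j * l i ∈ L := by
  refine (isSMulRegular_quotient_iff_mem_of_smul_mem L x).1 hx _ ?_
  have hcomb : x • (k i * l j - k j * l i) =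
      k i * (x * l j - y * k j) - k j * (x * l i - y * k i) := by
    rw [smul_eq_mul]
    ring
  rw [hcomb]
  exact sub_mem (L.mul_mem_left _ (h j)) (L.mul_mem_left _ (h i))

lemma exists_apply_sub_swap_eq_minor {k l : ι → R}
    (h : ∀ i j, k i * l j - k j * l i ∈ LinearMap.range d₁) :
    ∃ U : ι → ι → F₁, ∀ i j, d₁ (U i j - U j i) = k i * l j - k j * l i := by
  classical
  let _ : LinearOrder ι := IsWellOrder.linearOrder WellOrderingRel
  choose A hA using h
  refine ⟨fun i j ↦ if i < j then A i j else 0, fun i j ↦ ?_⟩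
  rcases lt_trichotomy i j with hij | rfl | hij
  · simp [hij, hij.not_gt, hA]
  · simp
  · simp [hij, hij.not_gt, hA]

lemma sum_smul_sum_smul_sub_swap [Fintype ι] (ρ : ι → R) (U : ι → ι → F₁) :
    ∑ i, ρ i • ∑ j, ρ j • (U i j - U j i) = 0 := by
  have hswap : ∑ i, ∑ j, (ρ i * ρ j) • U i j = ∑ i, ∑ j, (ρ i * ρ j) • U j i := by
    rw [Finset.sum_comm]
    simp only [mul_comm]
  simp only [Finset.smul_sum, smul_smul, smul_sub, Finset.sum_sub_distrib]
  rw [hswap, sub_self]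

-- The minors lift to an alternating matrix over `F₁`, whose quadratic form at `ρ` vanishes.
lemma koszulSyzygy_mem_smul_ker_of_minors [Fintype ι] {𝔞 : Ideal R} {ρ k l : ι → R} {u v : F₁}
    (hρ : ∀ i, ρ i ∈ 𝔞) (hu : d₁ u = ρ ⬝ᵥ k) (hv : d₁ v = ρ ⬝ᵥ l)
    (hminor : ∀ i j, k i * l j - k j * l i ∈ LinearMap.range d₁) :
    koszulSyzygy d₁ u v ∈ 𝔞 • LinearMap.ker d₁ := by
  obtain ⟨U, hU⟩ := exists_apply_sub_swap_eq_minor hminor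
  have hker (i : ι) : k i • v - l i • u - ∑ j, ρ j • (U i j - U j i) ∈ LinearMap.ker d₁ := by
    have hexpand : ∑ j, ρ j * (k i * l j - k j * l i) = k i * ρ ⬝ᵥ l - l i * ρ ⬝ᵥ k := by
      simp only [dotProduct, Finset.mul_sum, ← Finset.sum_sub_distrib]
      exact Finset.sum_congr rfl fun j _ ↦ by ring
    rw [LinearMap.mem_ker, map_sub, map_sub, map_sum]
    simp only [map_smul, smul_eq_mul, hU, hu, hv, hexpand, sub_self]
  have hsum : koszulSyzygy d₁ u v =
      ∑ i, ρ i • (k i • v - l i • u - ∑ j, ρ j • (U i j - U j i)) := by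
    simp only [smul_sub _ (_ - _), Finset.sum_sub_distrib, sum_smul_sum_smul_sub_swap, sub_zero,
      smul_smul, smul_sub _ (_ • _), ← Finset.sum_smul, koszulSyzygy_apply, hu, hv, dotProduct]
  rw [hsum]
  exact Submodule.sum_mem _ fun i _ ↦ Submodule.smul_mem_smul (hρ i) (hker i)

lemma IsKoszulLift.apply_sub_add_eq {F₃ : Type*} [AddCommGroup F₃] [Module R F₃]
    {d₃ : F₃ →ₗ[R] F₂} {a b c : F₁} {f_ab f_ac f_bc : F₂} {w : F₃}
    (hw : IsKoszulLift d₁ d₂ d₃ a b c f_ab f_ac f_bc w) {σ : F₂ →ₗ[R] R} (hσ : σ f_bc = 1) :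
    d₁ (a - σ f_ac • b + σ f_ab • c) = σ (d₃ w) := by
  simp only [hw.apply_top, map_add, map_sub, map_smul, smul_eq_mul, hσ]
  ring

/- Modulo `b, c` the values `d₁ a` and `d₁ v` become `σ ∘ d₃` of the Koszul lifts `k, l`, which are
proportional modulo `d₁ b, d₁ c`. -/
lemma IsResolution.exists_koszulSyzygy_mem_smul_ker [Finite ι] {d₃ : (ι → R) →ₗ[R] F₂}
    (h : IsResolution d₁ d₂ d₃) {𝔞 : Ideal R} {b c : F₁} {f_bc : F₂}
    (hbc : d₂ f_bc = koszulSyzygy d₁ b c) {σ : F₂ →ₗ[R] R} (hσ : σ f_bc = 1)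
    (hσd₃ : ∀ k, σ (d₃ k) ∈ 𝔞) {a : F₁}
    (ha : IsSMulRegular (R ⧸ Ideal.span {d₁ b, d₁ c}) (d₁ a)) (v : F₁) :
    ∃ α β γ δ : R, koszulSyzygy d₁ (a + α • b + β • c) (v + γ • b + δ • c) ∈
      𝔞 • LinearMap.ker d₁ := by
  classical
  have := Fintype.ofFinite ι
  obtain ⟨f_ab, f_ac, k, hk⟩ := h.exists_isKoszulLift a hbc
  obtain ⟨f_vb, f_vc, l, hl⟩ := h.exists_isKoszulLift v hbc
  have hle : Ideal.span {d₁ b, d₁ c} ≤ LinearMap.range d₁ := by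
    rw [Ideal.span_le]
    rintro _ (rfl | rfl)
    exacts [⟨b, rfl⟩, ⟨c, rfl⟩]
  have hminor := minor_mem_of_isSMulRegular ha fun i ↦
    mem_smul_top_pi_iff.1 (h.smul_sub_smul_mem_of_isKoszulLift hk hl) i
  have hdot (w : ι → R) : σ (d₃ w) = (fun i ↦ σ (d₃ (Pi.single i 1))) ⬝ᵥ w := by
    conv_lhs => rw [pi_eq_sum_univ' w]
    simp [dotProduct, mul_comm]
  refine ⟨-σ f_ac, σ f_ab, -σ f_vc, σ f_vb, ?_⟩
  rw [neg_smul, neg_smul, ← sub_eq_add_neg, ← sub_eq_add_neg]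
  exact koszulSyzygy_mem_smul_ker_of_minors (fun i ↦ hσd₃ _)
    ((hk.apply_sub_add_eq hσ).trans (hdot k)) ((hl.apply_sub_add_eq hσ).trans (hdot l))
    fun i j ↦ hle (hminor i j)

lemma exists_apply_eq_one_of_notMem_smul_top [Finite ι] [IsLocalRing R] {f : ι → R}
    (hf : f ∉ maximalIdeal R • (⊤ : Submodule R (ι → R))) : ∃ σ : (ι → R) →ₗ[R] R, σ f = 1 := by
  rw [mem_smul_top_pi_iff, not_forall] at hf
  obtain ⟨i, hi⟩ := hf
  obtain ⟨δ, hδ⟩ := (notMem_maximalIdeal.1 hi).exists_left_inv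
  exact ⟨δ • LinearMap.proj i, hδ⟩

end VanishingProducts

section LocalRing

variable {R F₁ ι₁ ι₂ ι₃ : Type*} [CommRing R] [IsLocalRing R] [AddCommGroup F₁]
  [Module R F₁] {d₁ : F₁ →ₗ[R] R}

lemma exists_isRegular_triple_sub_mem_smul_top [IsNoetherianRing R]
    (hd₁ : ∀ v, d₁ v ∈ maximalIdeal R) {x y z : F₁} (h : IsRegular R [d₁ x, d₁ y, d₁ z])
    (a b c : F₁) :
    ∃ a' b' c', a' - a ∈ maximalIdeal R • (⊤ : Submodule R F₁) ∧
      b' - b ∈ maximalIdeal R • (⊤ : Submodule R F₁) ∧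
      c' - c ∈ maximalIdeal R • (⊤ : Submodule R F₁) ∧ IsRegular R [d₁ a', d₁ b', d₁ c'] := by
  obtain ⟨c', hc, hregc⟩ :=
    exists_sub_mem_smul_top_isRegular_cons d₁ (rs := [d₁ x, d₁ y]) h (hd₁ c)
  obtain ⟨b', hb, hregb⟩ :=
    exists_sub_mem_smul_top_isRegular_cons d₁ (rs := [d₁ c', d₁ x]) hregc (hd₁ b)
  obtain ⟨a', ha, hrega⟩ :=
    exists_sub_mem_smul_top_isRegular_cons d₁ (rs := [d₁ b', d₁ c']) hregb (hd₁ a)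
  exact ⟨a', b', c', ha, hb, hc, hrega⟩

variable [Finite ι₂] [Finite ι₃] {d₂ : (ι₂ → R) →ₗ[R] F₁} {d₃ : (ι₃ → R) →ₗ[R] (ι₂ → R)}

namespace IsMinimalResolution

lemma exists_isDualPair_koszulSyzygy_mem [IsNoetherianRing R] (h : IsMinimalResolution d₁ d₂ d₃)
    (B : Module.Basis ι₁ R F₁) (i : Fin 4 ↪ ι₁) {x y z : F₁}
    (hreg : IsRegular R [d₁ x, d₁ y, d₁ z]) :
    ∃ (p q : F₁ →ₗ[R] R) (a b : F₁), IsDualPair p q a b ∧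
      koszulSyzygy d₁ a b ∈ maximalIdeal R • LinearMap.ker d₁ := by
  classical
  have coord_apply (s t : Fin 4) : B.coord (i s) (B (i t)) = if t = s then 1 else 0 := by
    simp [Finsupp.single_apply]
  obtain ⟨b, c, a, hb, hc, ha, hreg'⟩ :=
    exists_isRegular_triple_sub_mem_smul_top h.apply₁_mem hreg (B (i 1)) (B (i 2)) (B (i 0))
  obtain ⟨f, hf⟩ := exists_lift_koszulSyzygy h.exact₁ b c
  by_cases hf_mem : f ∈ maximalIdeal R • (⊤ : Submodule R (ι₂ → R))
  · have hdual : IsDualPair (B.coord (i 1)) (B.coord (i 2)) (B (i 1)) (B (i 2)) :=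
      ⟨by simp [coord_apply], by simp [coord_apply], by simp [coord_apply], by simp [coord_apply]⟩
    obtain ⟨p, q, hpq⟩ := hdual.exists_of_sub_mem hb hc
    exact ⟨p, q, b, c, hpq, (mem_smul_ker_iff h.exact₁).2 ⟨f, hf_mem, hf⟩⟩
  · obtain ⟨σ, hσ⟩ := exists_apply_eq_one_of_notMem_smul_top hf_mem
    have hσd₃ (k : ι₃ → R) : σ (d₃ k) ∈ maximalIdeal R := by
      simpa using Submodule.smul_top_le_comap_smul_top _ σ (h.apply₃_mem k)
    obtain ⟨α, β, γ, δ, hker⟩ := h.toIsResolution.exists_koszulSyzygy_mem_smul_ker hf hσ hσd₃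
      (isSMulRegular_quotient_span_pair hreg'.toIsWeaklyRegular) (B (i 3))
    have hdual : IsDualPair (B.coord (i 0)) (B.coord (i 3))
        (B (i 0) + α • B (i 1) + β • B (i 2)) (B (i 3) + γ • B (i 1) + δ • B (i 2)) := by
      constructor <;> simp only [map_add, map_smul, coord_apply] <;> simp
    obtain ⟨p, q, hpq⟩ := hdual.exists_of_sub_mem
      (a' := a + α • b + β • c) (b' := B (i 3) + γ • b + δ • c) (by
        convert add_mem (add_mem ha (Submodule.smul_mem _ α hb)) (Submodule.smul_mem _ β hc) using 1
        module) (by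
        convert add_mem (Submodule.smul_mem _ γ hb) (Submodule.smul_mem _ δ hc) using 1
        module)
    exact ⟨p, q, _, _, hpq, hker⟩

lemma isGrade3PerfectOfFormat_basicDoubleLink [Module.Free R F₁] [Module.Finite R F₁]
    (h : IsMinimalResolution d₁ d₂ d₃) {p q : F₁ →ₗ[R] R} {a b c : F₁} (hpq : IsDualPair p q a b)
    (hker : koszulSyzygy d₁ a b ∈ maximalIdeal R • LinearMap.ker d₁)
    (hreg : IsRegular R [d₁ a, d₁ b, d₁ c]) (hF₁ : 3 ≤ Module.finrank R F₁)
    (hι₂ : Nat.card ι₂ + 1 = Module.finrank R F₁ + Nat.card ι₃) :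
    IsGrade3PerfectOfFormat (basicDoubleLink (LinearMap.range d₁) (d₁ a) (d₁ b) (d₁ c))
      (Module.finrank R F₁) (Nat.card ι₃ + 1) := by
  obtain ⟨g, hg_mem, hg⟩ := (mem_smul_ker_iff h.exact₁).1 hker
  have := Fintype.ofFinite ι₂
  have := Fintype.ofFinite ι₃
  refine ⟨⟨d₁ a, d₁ b, d₁ c * d₁ c, ?_, ?_, ?_,
    isRegular_concat_sq (rs := [d₁ a, d₁ b]) hreg⟩, hF₁, by simp, ?_⟩
  · exact Ideal.mem_sup_left (Ideal.subset_span (by simp))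
  · exact Ideal.mem_sup_left (Ideal.subset_span (by simp))
  · exact Ideal.mem_sup_right (Ideal.mul_mem_mul (Ideal.mem_span_singleton_self _) ⟨c, rfl⟩)
  · rw [← BasicDoubleLink.range_diff₁ hpq]
    refine (BasicDoubleLink.isMinimalResolution hpq h hreg hg hg_mem).hasResolutionFormat rfl ?_ ?_
    · simp only [Module.finrank_prod, Module.finrank_self, Module.finrank_fintype_fun_eq_card,
        ← Nat.card_eq_fintype_card]
      omega
    · simp [add_comm]

end IsMinimalResolution

end LocalRing

theorem stmt_5_general (Q : Type*) [CommRing Q] [IsNoetherianRing Q] [IsLocalRing Q]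
    (I : Ideal Q) (m n : ℕ) (hI : IsGrade3PerfectOfFormat I m n) (hm : 4 ≤ m) :
    ∃ J : Ideal Q, IsGrade3PerfectOfFormat J m (n + 1) ∧ Linked I J := by
  obtain ⟨⟨_, _, _, hx, hy, hz, hreg⟩, -, -, hformat⟩ := hI
  obtain ⟨d₁, d₂, d₃, rfl, h⟩ := hformat.exists_isMinimalResolution
  obtain ⟨⟨x, rfl⟩, ⟨y, rfl⟩, ⟨z, rfl⟩⟩ := And.intro hx (And.intro hy hz)
  obtain ⟨p, q, a, b, hpq, hker⟩ := h.exists_isDualPair_koszulSyzygy_mem (Pi.basisFun Q (Fin m))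
    (Fin.castLEEmb hm) hreg
  obtain ⟨a', b', c, ha, hb, -, hreg'⟩ :=
    exists_isRegular_triple_sub_mem_smul_top h.apply₁_mem hreg a b z
  obtain ⟨p', q', hpq'⟩ := hpq.exists_of_sub_mem ha hb
  have hJ := h.isGrade3PerfectOfFormat_basicDoubleLink hpq'
    (koszulSyzygy_mem_smul_ker_of_sub_mem hker ha hb) hreg' (by rw [Module.finrank_fin_fun]; omega)
    (by rw [Module.finrank_fin_fun, Nat.card_fin, Nat.card_fin]; omega)
  rw [Module.finrank_fin_fun, Nat.card_fin] at hJ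
  exact ⟨_, hJ, h.toIsResolution.linked_basicDoubleLink hreg'⟩

/-- **Corollary 1.3(b).** Let `Q` be a commutative Noetherian local ring and `I ⊆ Q` a
grade `3` perfect ideal of resolution format `(1, m, m+n-1, n)`.  If `m ≥ 5`, then there
exists a grade `3` perfect ideal of resolution format `(1, m, m+n, n+1)` that is linked
to `I`. -/
theorem stmt_5 (Q : Type*) [CommRing Q] [IsNoetherianRing Q] [IsLocalRing Q]
    (I : Ideal Q) (m n : ℕ) (hI : IsGrade3PerfectOfFormat I m n) (hm : 5 ≤ m) :
    ∃ J : Ideal Q, IsGrade3PerfectOfFormat J m (n + 1) ∧ Linked I J := by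
  exact stmt_5_general Q I m n hI (by omega)
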